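/- Let X, A, R be nonempty finite sets, let q be a probability mass function on R, and let f : X × R → (A → [0,1]) satisfy ∑_{a ∈ A} f(x,r)(a) = 1 for all x, r, with p(a|x) = ∑_{r} q(r)·f(x,r)(a). For a tolerance ε > 0 set n = ⌈ln(2|X||A|)/(2ε²)⌉ + 1 (or any integer n with 2|A||X|·exp(−2nε²) < 1). If r⁽¹⁾,…,r⁽ⁿ⁾ are i.i.d. samples from q and p̂(a|x) = (1/n)∑_{i=1}^n f(x,r⁽ⁱ⁾)(a), then the probability (under q^{⊗n}) that |p(a|x) − p̂(a|x)| < ε holds simultaneously for all (a,x) ∈ A × X is strictly greater than 1 − 2|A||X|·exp(−2nε²) ≥ 0; in particular this event has positive probability. -/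

import Mathlib

open Classical

lemma aux_hoeffding {R : Type*} [Fintype R]
    (q : R → ℝ) (hq0 : ∀ r, 0 ≤ q r) (hq1 : ∑ r, q r = 1)
    (h : R → ℝ) (h0 : ∀ r, 0 ≤ h r) (h1 : ∀ r, h r ≤ 1) (t : ℝ) :
    ∑ r, q r * Real.exp (t * (h r - ∑ r', q r' * h r')) ≤ Real.exp (t ^ 2 / 8) := by
  let _ : MeasurableSpace R := ⊤
  have key : ∑ r, ENNReal.ofReal (q r) = 1 := by
    rw [← ENNReal.ofReal_sum_of_nonneg (fun r _ => hq0 r), hq1, ENNReal.ofReal_one]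
  let p : PMF R := PMF.ofFintype (fun r => ENNReal.ofReal (q r)) key
  have hint : ∀ g : R → ℝ, ∫ r, g r ∂p.toMeasure = ∑ r, q r * g r := by
    intro g
    rw [PMF.integral_eq_sum]
    refine Finset.sum_congr rfl fun r _ => ?_
    simp [p, ENNReal.toReal_ofReal (hq0 r)]
  have hs := ProbabilityTheory.hasSubgaussianMGF_of_mem_Icc (μ := p.toMeasure) (X := h)
    (a := 0) (b := 1) (measurable_from_top.aemeasurable)
    (Filter.Eventually.of_forall fun r => ⟨h0 r, h1 r⟩)
  have := hs.mgf_le t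
  rw [ProbabilityTheory.mgf, hint, hint] at this
  refine this.trans (le_of_eq ?_)
  congr 1
  norm_num
  ring

lemma aux_tail {R : Type*} [Fintype R]
    (q : R → ℝ) (hq0 : ∀ r, 0 ≤ q r) (hq1 : ∑ r, q r = 1)
    (h : R → ℝ) (h0 : ∀ r, 0 ≤ h r) (h1 : ∀ r, h r ≤ 1) (ε : ℝ) (hε : 0 < ε)
    (n : ℕ) (hn : 0 < n) :
    ∑ s : Fin n → R, (∏ i, q (s i)) *
      (if n * ε ≤ ∑ i, (h (s i) - ∑ r, q r * h r) then (1 : ℝ) else 0)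
      < Real.exp (-2 * n * ε ^ 2) := by
  set m := ∑ r, q r * h r with hm
  have hn' : (0 : ℝ) < n := by exact_mod_cast hn
  have hw : ∀ s : Fin n → R, 0 ≤ ∏ i, q (s i) := fun s => Finset.prod_nonneg fun i _ => hq0 _
  have hlt : ∑ s : Fin n → R, (∏ i, q (s i)) *
      (if n * ε ≤ ∑ i, (h (s i) - m) then (1 : ℝ) else 0)
      < ∑ s : Fin n → R, (∏ i, q (s i)) *
        Real.exp (4 * ε * (∑ i, (h (s i) - m) - n * ε)) := by
    apply Finset.sum_lt_sum
    · intro s _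
      apply mul_le_mul_of_nonneg_left _ (hw s)
      split_ifs with hc
      · exact Real.one_le_exp (mul_nonneg (by linarith) (by linarith))
      · exact (Real.exp_pos _).le
    · obtain ⟨r, hr, hr'⟩ : ∃ r, 0 < q r ∧ h r ≤ m := by
        by_contra! hcon
        have hz : ∑ r, q r * (h r - m) = 0 := by
          simp only [mul_sub, Finset.sum_sub_distrib, ← Finset.sum_mul, hq1, ← hm]
          ring
        have hnn : ∀ r, 0 ≤ q r * (h r - m) := by
          intro r
          rcases (hq0 r).eq_or_lt with e | e
          · simp [← e]
          · exact mul_nonneg e.le (by linarith [hcon r e])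
        have hz' := (Finset.sum_eq_zero_iff_of_nonneg (fun r _ => hnn r)).1 hz
        have : ∑ r, q r = 0 := by
          apply Finset.sum_eq_zero
          intro r hr
          by_contra hne
          have hp := lt_of_le_of_ne (hq0 r) (Ne.symm hne)
          have h3 := mul_pos hp (sub_pos.2 (hcon r hp))
          linarith [hz' r hr]
        linarith
      refine ⟨fun _ => r, Finset.mem_univ _, ?_⟩
      have hc : ¬ (n * ε ≤ ∑ i : Fin n, (h r - m)) := by
        simp only [Finset.sum_const, Finset.card_univ, Fintype.card_fin, nsmul_eq_mul]
        push Not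
        nlinarith
      rw [if_neg hc, mul_zero]
      exact mul_pos (Finset.prod_pos fun i _ => hr) (Real.exp_pos _)
  refine hlt.trans_le ?_
  have e1 : ∑ s : Fin n → R, (∏ i, q (s i)) *
        Real.exp (4 * ε * (∑ i, (h (s i) - m) - n * ε))
      = (∑ r, q r * Real.exp (4 * ε * (h r - m))) ^ n * Real.exp (-(4 * n * ε ^ 2)) := by
    have : (∑ r, q r * Real.exp (4 * ε * (h r - m))) ^ n
        = ∑ s : Fin n → R, ∏ i, (q (s i) * Real.exp (4 * ε * (h (s i) - m))) := by
      have := Finset.prod_univ_sum (fun _ : Fin n => (Finset.univ : Finset R))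
        (fun _ r => q r * Real.exp (4 * ε * (h r - m)))
      simpa using this
    rw [this, Finset.sum_mul]
    refine Finset.sum_congr rfl fun s _ => ?_
    rw [Finset.prod_mul_distrib, ← Real.exp_sum, mul_assoc (∏ i, q (s i)), ← Real.exp_add, ← Finset.mul_sum]
    congr 2
    ring
  rw [e1]
  have hH := aux_hoeffding q hq0 hq1 h h0 h1 (4 * ε)
  rw [← hm] at hH
  have hpow := pow_le_pow_left₀
    (Finset.sum_nonneg fun r _ => mul_nonneg (hq0 r) (Real.exp_pos _).le) hH n
  refine (mul_le_mul_of_nonneg_right hpow (Real.exp_pos _).le).trans (le_of_eq ?_)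
  rw [← Real.exp_nat_mul, ← Real.exp_add]
  congr 1
  ring

/-- for any `n` with `2|A||X|·exp(−2nε²) < 1`, under the `n`-fold
product measure `q^{⊗n}` the event that `|p(a|x) − p̂(a|x)| < ε` holds simultaneously
for all `(a,x)` has probability strictly greater than `1 − 2|A||X|·exp(−2nε²)`;
in particular the event has positive probability. -/
theorem stmt_13 {X A R : Type*} [Fintype X] [Fintype A] [Fintype R]
    [Nonempty X] [Nonempty A] [Nonempty R]
    (q : R → ℝ) (hq0 : ∀ r, 0 ≤ q r) (hq1 : ∑ r, q r = 1)
    (f : X → R → A → ℝ)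
    (hf0 : ∀ x r a, 0 ≤ f x r a) (hf1 : ∀ x r a, f x r a ≤ 1)
    (hfsum : ∀ x r, ∑ a, f x r a = 1)
    (ε : ℝ) (hε : 0 < ε) (n : ℕ)
    (hn : 2 * Fintype.card A * Fintype.card X * Real.exp (-2 * n * ε ^ 2) < 1) :
    ((∑ s : Fin n → R, (∏ i, q (s i)) *
        (if ∀ (a : A) (x : X),
            |(∑ r, q r * f x r a) - (1 / (n : ℝ)) * ∑ i, f x (s i) a| < ε
          then (1 : ℝ) else 0))
        > 1 - 2 * Fintype.card A * Fintype.card X * Real.exp (-2 * n * ε ^ 2)) ∧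
    (0 < ∑ s : Fin n → R, (∏ i, q (s i)) *
        (if ∀ (a : A) (x : X),
            |(∑ r, q r * f x r a) - (1 / (n : ℝ)) * ∑ i, f x (s i) a| < ε
          then (1 : ℝ) else 0)) := by
  have hn0 : 0 < n := by
    rcases Nat.eq_zero_or_pos n with e | e
    · subst e
      have h1 : (1 : ℝ) ≤ Fintype.card A := by exact_mod_cast Fintype.card_pos
      have h2 : (1 : ℝ) ≤ Fintype.card X := by exact_mod_cast Fintype.card_pos
      simp at hn
      nlinarith
    · exact e
  have hn' : (0 : ℝ) < n := by exact_mod_cast hn0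
  have hw : ∀ s : Fin n → R, 0 ≤ ∏ i, q (s i) := fun s => Finset.prod_nonneg fun i _ => hq0 _
  have hw1 : ∑ s : Fin n → R, ∏ i, q (s i) = 1 := by
    have := Finset.prod_univ_sum (fun _ : Fin n => (Finset.univ : Finset R)) (fun _ r => q r)
    simpa [hq1] using this.symm
  have hmain : (∑ s : Fin n → R, (∏ i, q (s i)) *
        (if ∀ (a : A) (x : X),
            |(∑ r, q r * f x r a) - (1 / (n : ℝ)) * ∑ i, f x (s i) a| < ε
          then (1 : ℝ) else 0))
        > 1 - 2 * Fintype.card A * Fintype.card X * Real.exp (-2 * n * ε ^ 2) := by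
    let U : A × X → (Fin n → R) → ℝ := fun ax s =>
      if n * ε ≤ ∑ i, (f ax.2 (s i) ax.1 - ∑ r, q r * f ax.2 r ax.1) then 1 else 0
    let L : A × X → (Fin n → R) → ℝ := fun ax s =>
      if n * ε ≤ ∑ i, ((1 - f ax.2 (s i) ax.1) - ∑ r, q r * (1 - f ax.2 r ax.1)) then 1 else 0
    have hU0 : ∀ ax s, 0 ≤ U ax s := fun ax s => by
      dsimp only [U]; split_ifs <;> norm_num
    have hL0 : ∀ ax s, 0 ≤ L ax s := fun ax s => by
      dsimp only [L]; split_ifs <;> norm_num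
    have hU : ∀ ax, ∑ s : Fin n → R, (∏ i, q (s i)) * U ax s < Real.exp (-2 * n * ε ^ 2) :=
      fun ax => aux_tail q hq0 hq1 (fun r => f ax.2 r ax.1) (fun r => hf0 _ _ _)
        (fun r => hf1 _ _ _) ε hε n hn0
    have hL : ∀ ax, ∑ s : Fin n → R, (∏ i, q (s i)) * L ax s < Real.exp (-2 * n * ε ^ 2) :=
      fun ax => aux_tail q hq0 hq1 (fun r => 1 - f ax.2 r ax.1)
        (fun r => sub_nonneg.2 (hf1 _ _ _))
        (fun r => by linarith [hf0 ax.2 r ax.1]) ε hε n hn0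
    have hsum : ∑ ax : A × X, (∑ s : Fin n → R, (∏ i, q (s i)) * U ax s
          + ∑ s : Fin n → R, (∏ i, q (s i)) * L ax s)
        < ∑ ax : A × X, (2 * Real.exp (-2 * n * ε ^ 2)) :=
      Finset.sum_lt_sum_of_nonempty Finset.univ_nonempty
        fun ax _ => by linarith [hU ax, hL ax]
    have hcard : ∑ ax : A × X, (2 * Real.exp (-2 * n * ε ^ 2))
        = 2 * Fintype.card A * Fintype.card X * Real.exp (-2 * n * ε ^ 2) := by
      simp only [Finset.sum_const, Finset.card_univ, Fintype.card_prod, nsmul_eq_mul]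
      push_cast
      ring
    have hswap : ∑ ax : A × X, (∑ s : Fin n → R, (∏ i, q (s i)) * U ax s
          + ∑ s : Fin n → R, (∏ i, q (s i)) * L ax s)
        = ∑ s : Fin n → R, (∏ i, q (s i)) * ∑ ax : A × X, (U ax s + L ax s) := by
      simp only [← Finset.sum_add_distrib, ← mul_add]
      rw [Finset.sum_comm]
      simp only [Finset.mul_sum]
    have hpt : ∑ s : Fin n → R, (∏ i, q (s i)) ≤ ∑ s : Fin n → R, ((∏ i, q (s i)) *
        (if ∀ (a : A) (x : X),
            |(∑ r, q r * f x r a) - (1 / (n : ℝ)) * ∑ i, f x (s i) a| < ε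
          then (1 : ℝ) else 0) + (∏ i, q (s i)) * ∑ ax : A × X, (U ax s + L ax s)) := by
      apply Finset.sum_le_sum
      intro s _
      rw [← mul_add]
      apply le_mul_of_one_le_right (hw s)
      have hnn : ∀ ax ∈ (Finset.univ : Finset (A × X)), 0 ≤ U ax s + L ax s :=
        fun ax _ => add_nonneg (hU0 ax s) (hL0 ax s)
      split_ifs with hc
      · linarith [Finset.sum_nonneg hnn]
      · push Not at hc
        obtain ⟨a, x, hax⟩ := hc
        have hle := Finset.single_le_sum hnn (Finset.mem_univ (a, x))
        have hone : 1 ≤ U (a, x) s + L (a, x) s := by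
          have hS : (n : ℝ) * ((1 / (n : ℝ)) * ∑ i, f x (s i) a) = ∑ i, f x (s i) a := by
            field_simp
          rcases le_abs.1 hax with h | h
          · have : L (a, x) s = 1 := by
              dsimp only [L]
              apply if_pos
              simp only [mul_sub, mul_one, Finset.sum_sub_distrib, hq1, Finset.sum_const,
                Finset.card_univ, Fintype.card_fin, nsmul_eq_mul]
              have := mul_le_mul_of_nonneg_left h hn'.le
              rw [mul_sub, hS] at this
              linarith
            linarith [hU0 (a, x) s]
          · have : U (a, x) s = 1 := by
              dsimp only [U]
              apply if_pos
              simp only [Finset.sum_sub_distrib, Finset.sum_const,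
                Finset.card_univ, Fintype.card_fin, nsmul_eq_mul]
              have := mul_le_mul_of_nonneg_left h hn'.le
              rw [neg_sub, mul_sub, hS] at this
              linarith
            linarith [hL0 (a, x) s]
        linarith
    rw [Finset.sum_add_distrib, hw1, ← hswap] at hpt
    rw [hcard] at hsum
    linarith
  exact ⟨hmain, by linarith⟩
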